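/- Let X be a length space, let Y ⊆ X be nonempty, and let F₁, F₂ : Y → ℝ be bounded Lipschitz functions with absolutely minimal (AM) extensions u₁, u₂ : X → ℝ respectively. Fix L > 0 and set Z_L := {x ∈ X : Lip_x u₁ > L}, where Lip_x u := inf{Lip_W u : W ⊆ X open, x ∈ W}. Suppose that F₁ = F₂ on Z_L ∩ Y, that Lip_{Y∖Z_L} F₂ ≤ L, and that sup{|F₂(y) − u₁(x)|/d(y,x) : y ∈ Y∖Z_L, x ∈ Z_L} ≤ L. Then u₁ = u₂ on Z_L. -/

import Mathlib

open Metric Set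

noncomputable section

/-- The length of a continuous path: its total variation. -/
def pathLength {X : Type*} [MetricSpace X] {x y : X} (γ : Path x y) : ENNReal :=
  eVariationOn (fun t => γ t) (Set.univ : Set unitInterval)

/-- A metric space is a length space if the distance between any two points equals the
infimum of the lengths of continuous paths joining them. -/
def IsLengthSpace (X : Type*) [MetricSpace X] : Prop :=
  ∀ x y : X, edist x y = ⨅ γ : Path x y, pathLength γ

/-- The (possibly infinite) Lipschitz constant of `u` on `S`:
`Lip_S u = sup {|u x - u y| / d(x,y) : x, y ∈ S, x ≠ y}`. -/
def lipOn {X : Type*} [MetricSpace X] (u : X → ℝ) (S : Set X) : ENNReal :=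
  ⨆ (x : X) (_ : x ∈ S) (y : X) (_ : y ∈ S) (_ : x ≠ y),
    ENNReal.ofReal (|u x - u y| / dist x y)

/-- `u : X → ℝ` is an absolutely minimal (AM) extension of `F` prescribed on `Y`:
`u` is Lipschitz, `u = F` on `Y`, and `Lip_U u = Lip_{∂U} u` for every open `U ⊆ X \ Y`. -/
def IsAMExtension {X : Type*} [MetricSpace X] (Y : Set X) (F u : X → ℝ) : Prop :=
  lipOn u Set.univ < ⊤ ∧ Set.EqOn u F Y ∧
    ∀ U : Set X, IsOpen U → U ⊆ Yᶜ → lipOn u U = lipOn u (frontier U)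

/-- The pointwise Lipschitz constant `Lip_x u = inf {Lip_W u : W open, x ∈ W}`. -/
def lipAt {X : Type*} [MetricSpace X] (u : X → ℝ) (x : X) : ENNReal :=
  ⨅ (W : Set X) (_ : IsOpen W) (_ : x ∈ W), lipOn u W

/-!
Taking suprema over `ε`-balls turns `u₁` and `-u₂` into discretely infinity-subharmonic functions
away from `Y`. Where the first of them rises by at most `L * ε` per step, replace it by a function
descending with slope exactly `L`, starting from the set where it rises faster. The result is
still discretely subharmonic and rises by at least `L * ε` in some step from every point, so that
the sum with the second function obeys a maximum principle: following steepest ascent from an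
almost maximal point, one stays almost maximal and climbs without bound, unless one comes close to
`Y`. Near `Y` the hypotheses bound the sum by a multiple of `ε`, and `ε → 0` yields `u₁ ≤ u₂`
where the local Lipschitz constant of `u₁` exceeds `L`. The converse inequality is the same
statement for `-u₁` and `-u₂`.
-/

open Filter
open scoped NNReal Topology

section Lipschitz

variable {X : Type*} [MetricSpace X] {u : X → ℝ} {K : ℝ≥0}

lemma lipOn_le_iff {S : Set X} : lipOn u S ≤ K ↔ LipschitzOnWith K u S := by
  simp only [lipOn, iSup_le_iff, lipschitzOnWith_iff_dist_le_mul, Real.dist_eq]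
  refine forall₄_congr fun x _ y _ => ?_
  rcases eq_or_ne x y with rfl | hxy
  · simp
  · rw [← ENNReal.ofReal_coe_nnreal, ENNReal.ofReal_le_ofReal_iff K.coe_nonneg,
      div_le_iff₀ (dist_pos.2 hxy)]
    exact forall_prop_of_true hxy

lemma lipOn_neg (u : X → ℝ) (S : Set X) : lipOn (-u) S = lipOn u S := by
  simp only [lipOn, Pi.neg_apply, neg_sub_neg, abs_sub_comm]

lemma lipAt_neg (u : X → ℝ) (x : X) : lipAt (-u) x = lipAt u x := by
  simp only [lipAt, lipOn_neg]

lemma lipAt_le_of_lipschitzOnWith {W : Set X} {x : X} (hW : IsOpen W) (hx : x ∈ W)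
    (hu : LipschitzOnWith K u W) : lipAt u x ≤ K :=
  (iInf₂_le_of_le W hW (iInf_le _ hx)).trans (lipOn_le_iff.2 hu)

lemma exists_isOpen_lipschitzOnWith_of_lipAt_lt {x : X} (h : lipAt u x < K) :
    ∃ W, IsOpen W ∧ x ∈ W ∧ LipschitzOnWith K u W := by
  simp only [lipAt, iInf_lt_iff] at h
  obtain ⟨W, hW, hx, hlt⟩ := h
  exact ⟨W, hW, hx, lipOn_le_iff.1 hlt.le⟩

lemma edist_le_mul_pathLength {x y : X} (γ : Path x y) (h : ∀ t, lipAt u (γ t) < K) :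
    edist (u x) (u y) ≤ K * pathLength γ := by
  choose W hWo hWm hW using fun t => exists_isOpen_lipschitzOnWith_of_lipAt_lt (h t)
  obtain ⟨t, ht0, htm, ⟨N, hN⟩, htW⟩ := exists_monotone_Icc_subset_open_cover_unitInterval
    (c := fun s => γ ⁻¹' W s) (fun s => (hWo s).preimage γ.continuous)
    (fun s _ => mem_iUnion.2 ⟨s, hWm s⟩)
  have variation_le (n : ℕ) :
      eVariationOn (u ∘ γ) (univ ∩ Icc 0 (t n)) ≤ K * eVariationOn γ (univ ∩ Icc 0 (t n)) := by
    induction n with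
    | zero =>
      rw [ht0, eVariationOn.subsingleton _ (by simp)]
      exact zero_le
    | succ n ih =>
      obtain ⟨s, hs⟩ := htW n
      rw [← eVariationOn.Icc_add_Icc (u ∘ γ) unitInterval.nonneg' (htm n.le_succ) (mem_univ (t n)),
        ← eVariationOn.Icc_add_Icc γ unitInterval.nonneg' (htm n.le_succ) (mem_univ (t n)), mul_add]
      exact add_le_add ih ((hW s).comp_eVariationOn_le fun r hr => hs hr.2)
  calc edist (u x) (u y) = edist ((u ∘ γ) 0) ((u ∘ γ) 1) := by simp
    _ ≤ eVariationOn (u ∘ γ) (univ ∩ Icc 0 (t N)) :=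
      eVariationOn.edist_le _ (by simp) (by simp [hN N le_rfl])
    _ ≤ K * eVariationOn γ (univ ∩ Icc 0 (t N)) := variation_le N
    _ ≤ K * pathLength γ := by
      gcongr
      exact eVariationOn.mono _ inter_subset_left

end Lipschitz

section LengthSpace

variable {X : Type*} [MetricSpace X] {x y z : X} {r s : ℝ}

lemma edist_add_edist_le_pathLength (γ : Path x y) (t : unitInterval) :
    edist x (γ t) + edist (γ t) y ≤ pathLength γ :=
  calc edist x (γ t) + edist (γ t) y = edist (γ 0) (γ t) + edist (γ t) (γ 1) := by simp
    _ ≤ eVariationOn γ (univ ∩ Icc 0 t) + eVariationOn γ (univ ∩ Icc t 1) := by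
      gcongr
      · exact eVariationOn.edist_le _ (by simp) (by simp)
      · exact eVariationOn.edist_le _ (by simp [unitInterval.le_one'])
          (by simp [unitInterval.le_one'])
    _ = eVariationOn γ (univ ∩ Icc 0 1) :=
      eVariationOn.Icc_add_Icc γ unitInterval.nonneg' unitInterval.le_one' (mem_univ t)
    _ ≤ pathLength γ := eVariationOn.mono _ inter_subset_left

lemma dist_add_dist_lt_of_pathLength_lt {γ : Path x y} (hγ : pathLength γ < ENNReal.ofReal r)
    (t : unitInterval) : dist x (γ t) + dist (γ t) y < r := by
  have h := (edist_add_edist_le_pathLength γ t).trans_lt hγ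
  rw [edist_dist, edist_dist, ← ENNReal.ofReal_add dist_nonneg dist_nonneg] at h
  exact (ENNReal.ofReal_lt_ofReal_iff_of_nonneg (by positivity)).1 h

namespace IsLengthSpace

lemma exists_pathLength_lt (hX : IsLengthSpace X) (h : dist x y < r) :
    ∃ γ : Path x y, pathLength γ < ENNReal.ofReal r :=
  iInf_lt_iff.1 (by rwa [← hX x y, edist_lt_ofReal])

lemma preconnectedSpace (hX : IsLengthSpace X) : PreconnectedSpace X where
  isPreconnected_univ := isPreconnected_of_forall_pair fun x _ y _ => by
    obtain ⟨γ, -⟩ := hX.exists_pathLength_lt (lt_add_one (dist x y))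
    exact ⟨range γ, subset_univ _, ⟨0, γ.source⟩, ⟨1, γ.target⟩, isPreconnected_range γ.continuous⟩

lemma exists_mem_frontier_dist_add_dist_lt (hX : IsLengthSpace X) {U : Set X} (hx : x ∈ U)
    (hy : y ∉ U) (h : dist x y < r) : ∃ w ∈ frontier U, dist x w + dist w y < r := by
  obtain ⟨γ, hγ⟩ := hX.exists_pathLength_lt h
  have frontier_nonempty : (frontier (γ ⁻¹' U)).Nonempty :=
    nonempty_frontier_iff.2 ⟨⟨0, by simpa using hx⟩,
      ne_univ_iff_exists_notMem _ |>.2 ⟨1, by simpa using hy⟩⟩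
  obtain ⟨t, ht⟩ := frontier_nonempty
  exact ⟨γ t, γ.continuous.frontier_preimage_subset U ht, dist_add_dist_lt_of_pathLength_lt hγ t⟩

lemma exists_dist_lt_dist_lt (hX : IsLengthSpace X) (hr : 0 < r) (hs : 0 < s)
    (h : dist x z < r + s) : ∃ y, dist x y < r ∧ dist y z < s := by
  rcases lt_or_ge (dist x z) r with hxz | hxz
  · exact ⟨z, hxz, by simpa using hs⟩
  obtain ⟨ρ, hρ, hρr⟩ := exists_between (max_lt hr (sub_lt_iff_lt_add.2 h))
  obtain ⟨hρ0, hρs⟩ := max_lt_iff.1 hρ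
  obtain ⟨y, hy, hlt⟩ := hX.exists_mem_frontier_dist_add_dist_lt (mem_ball_self hρ0)
    (by rw [mem_ball, dist_comm]; linarith) (sub_lt_iff_lt_add.1 hρs)
  have hxy : dist x y = ρ := mem_sphere'.1 (frontier_ball_subset_sphere hy)
  exact ⟨y, by linarith, by linarith⟩

/- A short path from `x` to `y` stays in the ball, so local constants integrate along it. -/
lemma dist_le_mul_dist_of_lipAt_le (hX : IsLengthSpace X) {u : X → ℝ} {L : ℝ≥0}
    (hu : ∀ z ∈ ball x r, lipAt u z ≤ L) (hy : y ∈ ball x r) :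
    dist (u x) (u y) ≤ L * dist x y := by
  have dist_le_of_pos {η : ℝ≥0} (hη : 0 < η) (hηr : dist x y + η < r) :
      dist (u x) (u y) ≤ (L + η : ℝ≥0) * (dist x y + η) := by
    obtain ⟨γ, hγ⟩ := hX.exists_pathLength_lt (lt_add_of_pos_right (dist x y) (NNReal.coe_pos.2 hη))
    have lipAt_lt (t : unitInterval) : lipAt u (γ t) < (L + η : ℝ≥0) := by
      refine (hu _ (mem_ball'.2 ?_)).trans_lt (by exact_mod_cast lt_add_of_pos_right L hη)
      linarith [dist_add_dist_lt_of_pathLength_lt hγ t, dist_nonneg (x := γ t) (y := y)]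
    have h := (edist_le_mul_pathLength γ lipAt_lt).trans (mul_le_mul_right hγ.le _)
    rw [edist_dist, ← ENNReal.ofReal_coe_nnreal, ← ENNReal.ofReal_mul (NNReal.coe_nonneg _)] at h
    exact (ENNReal.ofReal_le_ofReal_iff (by positivity)).1 h
  have htendsto : Tendsto (fun η : ℝ≥0 => (L + η : ℝ≥0) * (dist x y + η)) (𝓝[>] 0)
      (𝓝 (L * dist x y)) := by
    refine tendsto_nhdsWithin_of_tendsto_nhds ?_
    have hcont : Continuous fun η : ℝ≥0 => ((L + η : ℝ≥0) : ℝ) * (dist x y + η) := by fun_prop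
    simpa using hcont.tendsto 0
  have hsmall : ∀ᶠ η : ℝ≥0 in 𝓝[>] 0, dist x y + η < r := by
    have hcont : Continuous fun η : ℝ≥0 => dist x y + η := by fun_prop
    exact nhdsWithin_le_nhds <|
      (hcont.tendsto 0).eventually_lt_const (by simpa using mem_ball'.1 hy)
  refine ge_of_tendsto htendsto ?_
  filter_upwards [self_mem_nhdsWithin, hsmall] with η hη hηr using dist_le_of_pos hη hηr

end IsLengthSpace

end LengthSpace

namespace IsAMExtension

variable {X : Type*} [MetricSpace X] {Y : Set X} {F u : X → ℝ}

lemma exists_lipschitzWith (hu : IsAMExtension Y F u) : ∃ K, LipschitzWith K u := by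
  obtain ⟨K, hK⟩ := ENNReal.lt_iff_exists_coe.1 hu.1
  exact ⟨K, lipschitzOnWith_univ.1 (lipOn_le_iff.1 hK.1.le)⟩

lemma continuous (hu : IsAMExtension Y F u) : Continuous u :=
  hu.exists_lipschitzWith.choose_spec.continuous

lemma neg (hu : IsAMExtension Y F u) : IsAMExtension Y (-F) (-u) := by
  refine ⟨by simpa only [lipOn_neg] using hu.1, fun y hy => congrArg Neg.neg (hu.2.1 hy), ?_⟩
  simpa only [lipOn_neg] using hu.2.2

lemma lipschitzOnWith_closure (hu : IsAMExtension Y F u) {U : Set X} {K : ℝ≥0} (hU : IsOpen U)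
    (hUY : U ⊆ Yᶜ) (h : LipschitzOnWith K u (frontier U)) : LipschitzOnWith K u (closure U) :=
  LipschitzOnWith.closure hu.continuous.continuousOn
    (lipOn_le_iff.1 ((hu.2.2 U hU hUY).trans_le (lipOn_le_iff.2 h)))

/- On the frontier of the set where `u` exceeds the cone, `u` equals the cone and hence is
`b`-Lipschitz. By absolute minimality `u` is `b`-Lipschitz inside as well, so it cannot exceed the
cone along a short path towards the vertex. -/
lemma le_cone (hu : IsAMExtension Y F u) (hX : IsLengthSpace X) {V : Set X} (hV : IsOpen V)
    {x : X} {a : ℝ} {b : ℝ≥0} (hx : u x ≤ a) (hY : ∀ y ∈ Y ∩ V, F y ≤ a + b * dist y x)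
    (hfr : ∀ z ∈ frontier V, u z ≤ a + b * dist z x) {z : X} (hz : z ∈ V) :
    u z ≤ a + b * dist z x := by
  by_contra! hlt
  have hcone : Continuous fun z => a + b * dist z x := by fun_prop
  set U := {z | a + b * dist z x < u z} ∩ V
  have hU : IsOpen U := (isOpen_lt hcone hu.continuous).inter hV
  have hUY : U ⊆ Yᶜ := fun y hyU hyY => by
    have hFy := hY y ⟨hyY, hyU.2⟩
    rw [← hu.2.1 hyY] at hFy
    exact hFy.not_gt hyU.1
  have eq_cone {w : X} (hw : w ∈ frontier U) : u w = a + b * dist w x := by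
    rcases frontier_inter_subset _ _ hw with h | h
    · exact (frontier_lt_subset_eq hcone hu.continuous h.1).symm
    · exact (hfr w h.2).antisymm (closure_lt_subset_le hcone hu.continuous h.1)
  have hlip : LipschitzOnWith b u (closure U) := by
    refine hu.lipschitzOnWith_closure hU hUY (LipschitzOnWith.of_le_add_mul b fun p hp q hq => ?_)
    rw [eq_cone hp, eq_cone hq, add_assoc, ← mul_add, add_comm (dist q x)]
    gcongr
    exact dist_triangle p q x
  have hxU : x ∉ U := fun h => by simpa using (show a + b * dist x x < u x from h.1).trans_le hx
  have le_of_dist_lt {r : ℝ} (hr : dist z x < r) : u z ≤ a + b * r := by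
    obtain ⟨w, hw, hzwx⟩ :=
      hX.exists_mem_frontier_dist_add_dist_lt (show z ∈ U from ⟨hlt, hz⟩) hxU hr
    calc u z ≤ u w + b * dist z w := hlip.le_add_mul (subset_closure ⟨hlt, hz⟩) hw.1
      _ = a + b * (dist z w + dist w x) := by rw [eq_cone hw]; ring
      _ ≤ a + b * r := by gcongr
  have hcont : Continuous fun r : ℝ => a + b * r := by fun_prop
  have hle : u z ≤ a + b * dist z x := by
    refine ge_of_tendsto (tendsto_nhdsWithin_of_tendsto_nhds (s := Ioi (dist z x))
      (hcont.tendsto (dist z x))) ?_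
    filter_upwards [self_mem_nhdsWithin] with r hr using le_of_dist_lt hr
  exact hle.not_gt hlt

lemma bddAbove_range (hu : IsAMExtension Y F u) (hX : IsLengthSpace X) (hY : Y.Nonempty)
    (hF : BddAbove (F '' Y)) : BddAbove (range u) := by
  obtain ⟨M, hM⟩ := hF
  obtain ⟨y, hy⟩ := hY
  refine ⟨M, forall_mem_range.2 fun z => ?_⟩
  have h := hu.le_cone hX isOpen_univ (x := y) (a := M) (b := 0)
    ((hu.2.1 hy).trans_le (hM (mem_image_of_mem F hy)))
    (fun y hy => by simpa using hM (mem_image_of_mem F hy.1)) (by simp) (mem_univ z)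
  simpa using h

lemma le_add_mul_dist_of_ball (hu : IsAMExtension Y F u) (hX : IsLengthSpace X) {x : X} {R : ℝ}
    {b : ℝ≥0} (hY : ball x R ⊆ Yᶜ) (h : ∀ z ∈ ball x R, u z ≤ u x + b * R) {z : X}
    (hz : z ∈ ball x R) : u z ≤ u x + b * dist z x := by
  refine hu.le_cone hX isOpen_ball le_rfl (fun y hy => (hY hy.2 hy.1).elim) (fun w hw => ?_) hz
  rw [mem_sphere.1 (frontier_ball_subset_sphere hw)]
  exact closure_minimal h (isClosed_le hu.continuous continuous_const) hw.1

end IsAMExtension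

section BallSup

variable {X : Type*} [PseudoMetricSpace X] {ε c : ℝ} {v : X → ℝ} {x y : X}

/-- The supremum of `v` over the open ball of radius `ε` about `x`, the larger of the two terms of
the discrete infinity Laplacian. It has the junk value `0` if `v` is unbounded above on the ball or
`ε ≤ 0`. -/
def ballSup (ε : ℝ) (v : X → ℝ) (x : X) : ℝ :=
  sSup (v '' ball x ε)

lemma le_ballSup (hv : BddAbove (range v)) (hy : y ∈ ball x ε) : v y ≤ ballSup ε v x :=
  le_csSup (hv.mono (image_subset_range v _)) (mem_image_of_mem v hy)

lemma ballSup_le (hε : 0 < ε) (h : ∀ y ∈ ball x ε, v y ≤ c) : ballSup ε v x ≤ c :=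
  csSup_le ((nonempty_ball.2 hε).image v) (forall_mem_image.2 h)

lemma exists_lt_of_lt_ballSup (hε : 0 < ε) (h : c < ballSup ε v x) : ∃ y ∈ ball x ε, c < v y :=
  exists_mem_image.1 (exists_lt_of_lt_csSup ((nonempty_ball.2 hε).image v) h)

lemma bddAbove_range_ballSup (hε : 0 < ε) (hv : BddAbove (range v)) :
    BddAbove (range (ballSup ε v)) := by
  obtain ⟨M, hM⟩ := hv
  exact ⟨M, forall_mem_range.2 fun x => ballSup_le hε fun y _ => hM (mem_range_self y)⟩

lemma ballSup_le_of_lipschitzWith {K : ℝ≥0} (hv : LipschitzWith K v) (hε : 0 < ε) (x y : X) :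
    ballSup ε v x ≤ v y + K * (ε + dist x y) :=
  ballSup_le hε fun z hz => by
    refine (hv.le_add_mul z y).trans ?_
    gcongr
    linarith [dist_triangle z x y, mem_ball.1 hz]

lemma IsLengthSpace.ballSup_add_le {X : Type*} [MetricSpace X] (hX : IsLengthSpace X) {u : X → ℝ}
    (hu : BddAbove (range u)) {r s : ℝ} (hr : 0 < r) (hs : 0 < s) (x : X) :
    ballSup (r + s) u x ≤ ballSup r (ballSup s u) x := by
  refine ballSup_le (add_pos hr hs) fun z hz => ?_
  obtain ⟨y, hxy, hyz⟩ := hX.exists_dist_lt_dist_lt hr hs (mem_ball'.1 hz)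
  exact (le_ballSup hu (mem_ball'.2 hyz)).trans
    (le_ballSup (bddAbove_range_ballSup hs hu) (mem_ball'.2 hxy))

end BallSup

section DiscreteComparison

variable {X : Type*} [PseudoMetricSpace X] {ε κ : ℝ} {p q : X → ℝ}

/-- Discrete infinity-subharmonicity at scale `ε`: `2 * v x` is at most the supremum plus the
infimum of `v` over the ball of radius `ε` about `x`. The infimum is quantified out, so that only an
upper bound on `v` is needed for the inequality to be meaningful. -/
def IsDiscreteSubharmonicAt (ε : ℝ) (v : X → ℝ) (x : X) : Prop :=
  ∀ y ∈ ball x ε, 2 * v x ≤ ballSup ε v x + v y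

lemma two_mul_add_le_of_isDiscreteSubharmonicAt {m : ℝ} {x y : X} (hε : 0 < ε)
    (hp : IsDiscreteSubharmonicAt ε p x) (hq : IsDiscreteSubharmonicAt ε q x)
    (hm : ∀ z, p z + q z ≤ m) (hy : y ∈ ball x ε) :
    2 * (p x + q x) ≤ m + ballSup ε p x + q y := by
  have hqsup : ballSup ε q x ≤ m + ballSup ε p x - 2 * p x :=
    ballSup_le hε fun z hz => by linarith [hp z hz, hm z]
  linarith [hq y hy]

/- Moving from an almost maximum point of `p + q` to an almost maximum point of `p` in the ball
keeps `p + q` almost maximal and raises `p` by almost `κ`. Iterating makes `p` unbounded. -/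
theorem add_le_of_isDiscreteSubharmonicAt {Ω : Set X} {c : ℝ} (hε : 0 < ε) (hκ : 0 < κ)
    (hpb : BddAbove (range p)) (hqb : BddAbove (range q))
    (hp : ∀ x ∈ Ω, IsDiscreteSubharmonicAt ε p x) (hq : ∀ x ∈ Ω, IsDiscreteSubharmonicAt ε q x)
    (hsteep : ∀ x ∈ Ω, p x + κ ≤ ballSup ε p x) (hc : ∀ x ∉ Ω, p x + q x ≤ c) (x : X) :
    p x + q x ≤ c := by
  by_contra! hx
  have : Nonempty X := ⟨x⟩
  set m := ⨆ x, p x + q x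
  have le_m (z : X) : p z + q z ≤ m := le_ciSup (hpb.range_add hqb) z
  have hcm : c < m := hx.trans_le (le_m x)
  obtain ⟨Q, hQ⟩ := hqb
  have climb (n : ℕ) : ∀ η > 0, η ≤ m - c →
      ∃ z, m - η < p z + q z ∧ c - Q + n * (κ / 2) ≤ p z := by
    induction n with
    | zero =>
      intro η hη hηc
      obtain ⟨z, hz⟩ := exists_lt_of_lt_ciSup (sub_lt_self m hη)
      refine ⟨z, hz, ?_⟩
      have hqz : q z ≤ Q := hQ (mem_range_self z)
      simp only [Nat.cast_zero, zero_mul, add_zero]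
      linarith
    | succ n ih =>
      intro η hη hηc
      set δ := min (η / 3) (κ / 2)
      have hδ : 0 < δ := by positivity
      have hδη : δ ≤ η / 3 := min_le_left _ _
      have hδκ : δ ≤ κ / 2 := min_le_right _ _
      obtain ⟨z, hz, hpz⟩ := ih δ hδ (by linarith)
      have hzΩ : z ∈ Ω := by
        by_contra h
        linarith [hc z h]
      obtain ⟨y, hy, hpy⟩ := exists_lt_of_lt_ballSup hε (sub_lt_self (ballSup ε p z) hδ)
      have hsum := two_mul_add_le_of_isDiscreteSubharmonicAt hε (hp z hzΩ) (hq z hzΩ) le_m hy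
      refine ⟨y, by linarith, ?_⟩
      push_cast
      linarith [hsteep z hzΩ]
  obtain ⟨P, hP⟩ := hpb
  obtain ⟨n, hn⟩ := exists_nat_gt ((P - (c - Q)) / (κ / 2))
  obtain ⟨z, -, hz⟩ := climb n (m - c) (sub_pos.2 hcm) le_rfl
  have hpz : p z ≤ P := hP (mem_range_self z)
  linarith [(div_lt_iff₀ (half_pos hκ)).1 hn]

end DiscreteComparison

section Steepening

variable {X : Type*} [PseudoMetricSpace X] {ε κ c : ℝ} {v : X → ℝ} {x y : X}

/-- The points from which `v` can be raised by more than `κ` in one step of size `ε`. -/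
def steepSet (ε κ : ℝ) (v : X → ℝ) : Set X :=
  {x | v x + κ < ballSup ε v x}

/-- `ChainValue ε κ v x c` says that `c = v a - n * κ` for a chain of `n` steps of size `ε` leading
from `x` to `a`, where `a` is the only point of the chain in `steepSet ε κ v`. -/
inductive ChainValue (ε κ : ℝ) (v : X → ℝ) : X → ℝ → Prop
  | base {x : X} (hx : x ∈ steepSet ε κ v) : ChainValue ε κ v x (v x)
  | step {x y : X} {c : ℝ} (hx : x ∉ steepSet ε κ v) (hy : y ∈ ball x ε)
      (h : ChainValue ε κ v y c) : ChainValue ε κ v x (c - κ)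

/-- The function equal to `v` on `steepSet ε κ v` and descending from there with slope exactly `κ`
per step. It keeps the subharmonicity of `v` and is nowhere flatter than `κ`. -/
def steepen (ε κ : ℝ) (v : X → ℝ) (x : X) : ℝ :=
  sSup {c | ChainValue ε κ v x c}

lemma le_add_of_notMem_steepSet (hv : BddAbove (range v)) (hx : x ∉ steepSet ε κ v)
    (hy : y ∈ ball x ε) : v y ≤ v x + κ :=
  (le_ballSup hv hy).trans (not_lt.1 hx)

lemma ChainValue.le {f : X → ℝ} (hf : ∀ a ∈ steepSet ε κ v, v a ≤ f a)
    (hstep : ∀ x ∉ steepSet ε κ v, ∀ y ∈ ball x ε, f y ≤ f x + κ) (h : ChainValue ε κ v x c) :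
    c ≤ f x := by
  induction h with
  | base hx => exact hf _ hx
  | step hx hy _ ih => linarith [hstep _ hx _ hy]

lemma ChainValue.le_self (hv : BddAbove (range v)) (h : ChainValue ε κ v x c) : c ≤ v x :=
  h.le (fun _ _ => le_rfl) fun _ hx _ hy => le_add_of_notMem_steepSet hv hx hy

lemma ChainValue.le_steepen (hv : BddAbove (range v)) (h : ChainValue ε κ v x c) :
    c ≤ steepen ε κ v x :=
  le_csSup ⟨v x, fun _ hc => hc.le_self hv⟩ h

lemma exists_chainValue [PreconnectedSpace X] (hε : 0 < ε) (hA : (steepSet ε κ v).Nonempty)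
    (x : X) : ∃ c, ChainValue ε κ v x c := by
  set S := {x | ∃ c, ChainValue ε κ v x c}
  have mem_of_mem_ball {x y : X} (hy : y ∈ ball x ε) : y ∈ S → x ∈ S := by
    rintro ⟨c, hc⟩
    by_cases hx : x ∈ steepSet ε κ v
    · exact ⟨_, .base hx⟩
    · exact ⟨_, .step hx hy hc⟩
  have hopen : IsOpen S := isOpen_iff.2 fun x hx =>
    ⟨ε, hε, fun y hy => mem_of_mem_ball (mem_ball_comm.1 hy) hx⟩
  have hclosed : IsClosed S := isOpen_compl_iff.1 <| isOpen_iff.2 fun x hx =>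
    ⟨ε, hε, fun y hy hyS => hx (mem_of_mem_ball hy hyS)⟩
  obtain ⟨a, ha⟩ := hA
  exact (IsClopen.eq_univ ⟨hclosed, hopen⟩ ⟨a, _, .base ha⟩).ge (mem_univ x)

lemma steepen_le [PreconnectedSpace X] (hε : 0 < ε) (hA : (steepSet ε κ v).Nonempty) {f : X → ℝ}
    (hf : ∀ a ∈ steepSet ε κ v, v a ≤ f a)
    (hstep : ∀ x ∉ steepSet ε κ v, ∀ y ∈ ball x ε, f y ≤ f x + κ) (x : X) :
    steepen ε κ v x ≤ f x :=
  csSup_le (exists_chainValue hε hA x) fun _ hc => hc.le hf hstep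

lemma steepen_le_self [PreconnectedSpace X] (hε : 0 < ε) (hA : (steepSet ε κ v).Nonempty)
    (hv : BddAbove (range v)) (x : X) : steepen ε κ v x ≤ v x :=
  csSup_le (exists_chainValue hε hA x) fun _ hc => hc.le_self hv

lemma bddAbove_range_steepen [PreconnectedSpace X] (hε : 0 < ε)
    (hA : (steepSet ε κ v).Nonempty) (hv : BddAbove (range v)) :
    BddAbove (range (steepen ε κ v)) := by
  obtain ⟨M, hM⟩ := id hv
  exact ⟨M, forall_mem_range.2 fun x => (steepen_le_self hε hA hv x).trans (hM (mem_range_self x))⟩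

lemma steepen_eq_of_mem_steepSet (hx : x ∈ steepSet ε κ v) : steepen ε κ v x = v x := by
  have hset : {c | ChainValue ε κ v x c} = {v x} := by
    ext c
    refine ⟨fun h => ?_, fun h => h ▸ .base hx⟩
    cases h with
    | base _ => rfl
    | step hx' _ _ => exact absurd hx hx'
  rw [steepen, hset, csSup_singleton]

lemma steepen_sub_le_of_notMem_steepSet [PreconnectedSpace X] (hε : 0 < ε)
    (hA : (steepSet ε κ v).Nonempty) (hv : BddAbove (range v)) (hy : y ∈ ball x ε)
    (hyA : y ∉ steepSet ε κ v) : steepen ε κ v x - κ ≤ steepen ε κ v y := by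
  rw [sub_le_iff_le_add]
  refine csSup_le (exists_chainValue hε hA x) fun c hc => ?_
  linarith [(ChainValue.step hyA (mem_ball_comm.1 hy) hc).le_steepen hv]

lemma IsDiscreteSubharmonicAt.mem_steepSet (h : IsDiscreteSubharmonicAt ε v y)
    (hy : y ∈ ball x ε) (hlt : v x + κ < v y) : y ∈ steepSet ε κ v := by
  have := h x (mem_ball_comm.1 hy)
  rw [steepSet, mem_ofPred_eq]
  linarith

lemma ballSup_le_ballSup_steepen [PreconnectedSpace X] (hε : 0 < ε) (hv : BddAbove (range v))
    (hsub : ∀ y ∈ ball x ε, IsDiscreteSubharmonicAt ε v y) (hx : x ∈ steepSet ε κ v) :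
    ballSup ε v x ≤ ballSup ε (steepen ε κ v) x := by
  refine le_of_forall_lt fun c hc => ?_
  obtain ⟨y, hy, hlt⟩ := exists_lt_of_lt_ballSup hε (max_lt hc hx)
  obtain ⟨hcy, hxy⟩ := max_lt_iff.1 hlt
  refine hcy.trans_le ?_
  rw [← steepen_eq_of_mem_steepSet ((hsub y hy).mem_steepSet hy hxy)]
  exact le_ballSup (bddAbove_range_steepen hε ⟨x, hx⟩ hv) hy

lemma steepen_add_le_ballSup_steepen [PreconnectedSpace X] (hε : 0 < ε)
    (hA : (steepSet ε κ v).Nonempty) (hv : BddAbove (range v))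
    (hsub : ∀ y ∈ ball x ε, IsDiscreteSubharmonicAt ε v y) :
    steepen ε κ v x + κ ≤ ballSup ε (steepen ε κ v) x := by
  by_cases hx : x ∈ steepSet ε κ v
  · rw [steepen_eq_of_mem_steepSet hx]
    exact hx.le.trans (ballSup_le_ballSup_steepen hε hv hsub hx)
  · rw [← le_sub_iff_add_le]
    refine csSup_le (exists_chainValue hε hA x) fun c hc => ?_
    cases hc with
    | base hx' => exact absurd hx' hx
    | step _ hy hc =>
      gcongr
      exact (hc.le_steepen hv).trans (le_ballSup (bddAbove_range_steepen hε hA hv) hy)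

theorem isDiscreteSubharmonicAt_steepen [PreconnectedSpace X] (hε : 0 < ε)
    (hA : (steepSet ε κ v).Nonempty) (hv : BddAbove (range v))
    (hsub : ∀ y ∈ ball x ε, IsDiscreteSubharmonicAt ε v y) :
    IsDiscreteSubharmonicAt ε (steepen ε κ v) x := by
  intro y hy
  have hup := steepen_add_le_ballSup_steepen hε hA hv hsub
  by_cases hyA : y ∈ steepSet ε κ v
  swap
  · linarith [steepen_sub_le_of_notMem_steepSet hε hA hv hy hyA]
  have hvx := hsub x (mem_ball_self hε) y hy
  rw [steepen_eq_of_mem_steepSet hyA]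
  by_cases hx : x ∈ steepSet ε κ v
  · rw [steepen_eq_of_mem_steepSet hx]
    linarith [ballSup_le_ballSup_steepen hε hv hsub hx]
  · linarith [steepen_le_self hε hA hv x, show ballSup ε v x ≤ v x + κ from not_lt.1 hx]

end Steepening

section BallSupOfAMExtension

variable {X : Type*} [MetricSpace X] {Y : Set X} {F u : X → ℝ} {x : X} {ε : ℝ} {L : ℝ≥0}

namespace IsAMExtension

lemma two_mul_ballSup_le (hu : IsAMExtension Y F u) (hX : IsLengthSpace X)
    (hub : BddAbove (range u)) (hε : 0 < ε) (hY : ball x (2 * ε) ⊆ Yᶜ) :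
    2 * ballSup ε u x ≤ u x + ballSup (2 * ε) u x := by
  have hux : u x ≤ ballSup (2 * ε) u x := le_ballSup hub (mem_ball_self (by positivity))
  obtain ⟨b, hb⟩ : ∃ b : ℝ≥0, b * (2 * ε) = ballSup (2 * ε) u x - u x := by
    refine ⟨((ballSup (2 * ε) u x - u x) / (2 * ε)).toNNReal, ?_⟩
    rw [Real.coe_toNNReal _ (div_nonneg (sub_nonneg.2 hux) (by positivity)),
      div_mul_cancel₀ _ (by positivity)]
  have hcone : ballSup ε u x ≤ u x + b * ε := ballSup_le hε fun z hz => by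
    refine (hu.le_add_mul_dist_of_ball hX hY (b := b) (fun w hw => ?_)
      (ball_subset_ball (by linarith) hz)).trans ?_
    · linarith [le_ballSup hub hw]
    · gcongr
      exact (mem_ball.1 hz).le
  linarith

theorem isDiscreteSubharmonicAt_ballSup (hu : IsAMExtension Y F u) (hX : IsLengthSpace X)
    (hub : BddAbove (range u)) (hε : 0 < ε) (hY : ball x (2 * ε) ⊆ Yᶜ) :
    IsDiscreteSubharmonicAt ε (ballSup ε u) x := by
  intro y hy
  have hxy : u x ≤ ballSup ε u y := le_ballSup hub (mem_ball_comm.1 hy)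
  have hadd := hX.ballSup_add_le hub hε hε x
  rw [← two_mul] at hadd
  linarith [hu.two_mul_ballSup_le hX hub hε hY]

lemma lipAt_le_of_ballSup_le (hu : IsAMExtension Y F u) (hX : IsLengthSpace X)
    (hub : BddAbove (range u)) {R : ℝ} (hR : 0 < R) (hY : ball x R ⊆ Yᶜ)
    (h : ballSup R u x ≤ u x + L * R) : lipAt u x ≤ L := by
  obtain ⟨K, hK⟩ := hu.exists_lipschitzWith
  refine le_of_forall_gt_imp_ge_of_dense fun c hc => ?_
  obtain ⟨L', hLL', hL'c⟩ := ENNReal.lt_iff_exists_nnreal_btwn.1 hc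
  replace hLL' : (L : ℝ) < L' := by exact_mod_cast hLL'
  refine le_trans ?_ hL'c.le
  obtain ⟨ρ, hρ, hρR, hρL⟩ : ∃ ρ > 0, 3 * ρ < R ∧ (K + L') * ρ < (L' - L) * R := by
    have h₁ : ∀ᶠ ρ in 𝓝 (0 : ℝ), 3 * ρ < R := by
      apply (continuous_const_mul (3 : ℝ)).continuousAt.eventually_lt_const
      simpa using hR
    have h₂ : ∀ᶠ ρ in 𝓝 (0 : ℝ), (K + L') * ρ < (L' - L) * R := by
      apply (continuous_const_mul (K + L' : ℝ)).continuousAt.eventually_lt_const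
      simpa using mul_pos (sub_pos.2 hLL') hR
    exact (eventually_mem_nhdsWithin.and (nhdsWithin_le_nhds (h₁.and h₂))).exists
      (f := 𝓝[>] 0)
  refine lipAt_le_of_lipschitzOnWith isOpen_ball (mem_ball_self hρ)
    (LipschitzOnWith.of_le_add_mul L' fun z hz w hw => ?_)
  have hball : ball w (R - ρ) ⊆ ball x R :=
    ball_subset_ball' (by linarith [mem_ball.1 hw])
  refine hu.le_add_mul_dist_of_ball hX (hball.trans hY) (fun a ha => ?_) ?_
  · have hxw : K * dist x w ≤ K * ρ := by
      gcongr
      exact (mem_ball'.1 hw).le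
    linarith [le_ballSup hub (hball ha), hK.le_add_mul x w]
  · rw [mem_ball]
    linarith [dist_triangle_right z w x, mem_ball.1 hz, mem_ball.1 hw]

lemma mem_steepSet_of_lt_lipAt (hu : IsAMExtension Y F u) (hX : IsLengthSpace X)
    (hub : BddAbove (range u)) (hε : 0 < ε) (hY : ball x (2 * ε) ⊆ Yᶜ) (hx : L < lipAt u x) :
    x ∈ steepSet ε (L * ε) (ballSup ε u) := by
  contrapose! hx
  refine hu.lipAt_le_of_ballSup_le hX hub (by positivity) hY ?_
  have hadd := hX.ballSup_add_le hub hε hε x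
  rw [← two_mul] at hadd
  linarith [hu.two_mul_ballSup_le hX hub hε hY,
    show ballSup ε (ballSup ε u) x ≤ ballSup ε u x + L * ε from not_lt.1 hx]

end IsAMExtension

lemma IsLengthSpace.exists_lt_lipAt_of_mem_steepSet (hX : IsLengthSpace X)
    (hub : BddAbove (range u)) (hε : 0 < ε) (hx : x ∈ steepSet ε (L * ε) (ballSup ε u)) :
    ∃ z ∈ ball x (2 * ε), L < lipAt u z := by
  by_contra! h
  obtain ⟨y, hy, hlt⟩ := exists_lt_of_lt_ballSup hε hx
  obtain ⟨z, hz, hlt⟩ := exists_lt_of_lt_ballSup hε hlt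
  have hxz : dist x z < ε + ε := by
    linarith [dist_triangle x y z, mem_ball'.1 hy, mem_ball'.1 hz]
  obtain ⟨w, hxw, hwz⟩ := hX.exists_dist_lt_dist_lt hε hε hxz
  have hball : ball w ε ⊆ ball x (2 * ε) := ball_subset_ball' (by linarith [dist_comm w x])
  have hlip : dist (u z) (u w) ≤ L * ε := by
    rw [dist_comm]
    refine (hX.dist_le_mul_dist_of_lipAt_le (fun a ha => h a (hball ha))
      (mem_ball'.2 hwz)).trans ?_
    gcongr
  have huw : u w ≤ ballSup ε u x := le_ballSup hub (mem_ball'.2 hxw)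
  linarith [le_abs_self (u z - u w), Real.dist_eq (u z) (u w)]

lemma IsLengthSpace.steepen_ballSup_le_cone (hX : IsLengthSpace X) (hub : BddAbove (range u))
    {K : ℝ≥0} (hK : LipschitzWith K u) (hε : 0 < ε)
    (hA : (steepSet ε (L * ε) (ballSup ε u)).Nonempty) {y : X} {c : ℝ}
    (h : ∀ z, L < lipAt u z → u z ≤ c + L * dist z y) (x : X) :
    steepen ε (L * ε) (ballSup ε u) x ≤ c + L * dist x y + (3 * K + 2 * L) * ε := by
  have := hX.preconnectedSpace
  refine steepen_le hε hA (f := fun x => c + L * dist x y + (3 * K + 2 * L) * ε)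
    (fun a ha => ?_) (fun x _ z hz => ?_) x
  · obtain ⟨z, hz, hzL⟩ := hX.exists_lt_lipAt_of_mem_steepSet hub hε ha
    calc ballSup ε u a ≤ u z + K * (ε + dist a z) := ballSup_le_of_lipschitzWith hK hε a z
      _ ≤ c + L * (dist a y + 2 * ε) + K * (ε + 2 * ε) := by
        gcongr
        · refine (h z hzL).trans ?_
          gcongr
          linarith [dist_triangle z a y, mem_ball.1 hz]
        · exact (mem_ball'.1 hz).le
      _ = c + L * dist a y + (3 * K + 2 * L) * ε := by ring
  · have hzy : L * dist z y ≤ L * (ε + dist x y) := by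
      gcongr
      linarith [dist_triangle z x y, mem_ball.1 hz]
    linarith

end BallSupOfAMExtension

section Comparison

variable {X : Type*} [MetricSpace X] {Y : Set X} {F₁ F₂ u₁ u₂ : X → ℝ} {L : ℝ≥0}

lemma steepen_add_ballSup_neg_le (hX : IsLengthSpace X) (hu₁ : IsAMExtension Y F₁ u₁)
    (hu₂ : IsAMExtension Y F₂ u₂) (hb₁ : BddAbove (range u₁)) {K₁ K₂ : ℝ≥0}
    (hK₁ : LipschitzWith K₁ u₁) (hK₂ : LipschitzWith K₂ u₂) {ε : ℝ} (hε : 0 < ε)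
    (hA : (steepSet ε (L * ε) (ballSup ε u₁)).Nonempty)
    (hF : ∀ y ∈ Y, L < lipAt u₁ y → F₁ y ≤ F₂ y)
    (hcone : ∀ y ∈ Y, lipAt u₁ y ≤ L → ∀ z, L < lipAt u₁ z → u₁ z ≤ F₂ y + L * dist z y)
    {x y : X} (hy : y ∈ Y) (hyx : y ∈ ball x (3 * ε)) :
    steepen ε (L * ε) (ballSup ε u₁) x + ballSup ε (-u₂) x ≤ (4 * K₁ + 4 * K₂ + 5 * L) * ε := by
  have := hX.preconnectedSpace
  have hdist : dist x y ≤ 3 * ε := (mem_ball'.1 hyx).le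
  have hLip {K : ℝ≥0} {u : X → ℝ} (hu : LipschitzWith K u) :
      ballSup ε u x ≤ u y + K * (ε + 3 * ε) :=
    (ballSup_le_of_lipschitzWith hu hε x y).trans (by gcongr)
  have hu₂y : ballSup ε (-u₂) x ≤ -F₂ y + 4 * K₂ * ε := by
    have h := hLip hK₂.neg
    rw [Pi.neg_apply, hu₂.2.1 hy] at h
    linarith
  have hsteepen : steepen ε (L * ε) (ballSup ε u₁) x ≤ F₂ y + (4 * K₁ + 5 * L) * ε := by
    have hKε : 0 ≤ K₁ * ε := by positivity
    have hLε : 0 ≤ L * ε := by positivity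
    rcases lt_or_ge (L : ENNReal) (lipAt u₁ y) with hyL | hyL
    · have hv := steepen_le_self hε hA (bddAbove_range_ballSup hε hb₁) x
      have hu₁y := hLip hK₁
      rw [hu₁.2.1 hy] at hu₁y
      linarith [hF y hy hyL]
    · have hLd : L * dist x y ≤ L * (3 * ε) := by gcongr
      linarith [hX.steepen_ballSup_le_cone hb₁ hK₁ hε hA (hcone y hy hyL) x]
  linarith

lemma sub_le_mul_of_lt_lipAt (hX : IsLengthSpace X) (hu₁ : IsAMExtension Y F₁ u₁)
    (hu₂ : IsAMExtension Y F₂ u₂) (hb₁ : BddAbove (range u₁)) (hb₂ : BddAbove (range (-u₂)))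
    {K₁ K₂ : ℝ≥0} (hK₁ : LipschitzWith K₁ u₁) (hK₂ : LipschitzWith K₂ u₂) (hL : 0 < L)
    (hF : ∀ y ∈ Y, L < lipAt u₁ y → F₁ y ≤ F₂ y)
    (hcone : ∀ y ∈ Y, lipAt u₁ y ≤ L → ∀ z, L < lipAt u₁ z → u₁ z ≤ F₂ y + L * dist z y)
    {x : X} (hx : L < lipAt u₁ x) {ε : ℝ} (hε : 0 < ε) (hxY : ball x (2 * ε) ⊆ Yᶜ) :
    u₁ x - u₂ x ≤ (4 * K₁ + 4 * K₂ + 5 * L) * ε := by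
  have := hX.preconnectedSpace
  have hvb := bddAbove_range_ballSup hε hb₁
  have hxA := hu₁.mem_steepSet_of_lt_lipAt hX hb₁ hε hxY hx
  have hA : (steepSet ε (L * ε) (ballSup ε u₁)).Nonempty := ⟨x, hxA⟩
  have hsub : ∀ z ∈ {z | ball z (3 * ε) ⊆ Yᶜ}, ∀ y ∈ ball z ε,
      IsDiscreteSubharmonicAt ε (ballSup ε u₁) y := fun z hz y hy =>
    hu₁.isDiscreteSubharmonicAt_ballSup hX hb₁ hε
      ((ball_subset_ball' (by linarith [mem_ball.1 hy])).trans hz)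
  have hcomp := add_le_of_isDiscreteSubharmonicAt hε (mul_pos (NNReal.coe_pos.2 hL) hε)
    (bddAbove_range_steepen hε hA hvb) (bddAbove_range_ballSup hε hb₂)
    (fun z hz => isDiscreteSubharmonicAt_steepen hε hA hvb (hsub z hz))
    (fun z hz => hu₂.neg.isDiscreteSubharmonicAt_ballSup hX hb₂ hε
      ((ball_subset_ball (by linarith)).trans hz))
    (fun z hz => steepen_add_le_ballSup_steepen hε hA hvb (hsub z hz))
    (fun z hz => by
      obtain ⟨y, hyz, hy⟩ := not_subset.1 hz
      exact steepen_add_ballSup_neg_le hX hu₁ hu₂ hb₁ hK₁ hK₂ hε hA hF hcone (not_not.1 hy) hyz) x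
  rw [steepen_eq_of_mem_steepSet hxA] at hcomp
  have hu₁x : u₁ x ≤ ballSup ε u₁ x := le_ballSup hb₁ (mem_ball_self hε)
  have hu₂x : (-u₂) x ≤ ballSup ε (-u₂) x := le_ballSup hb₂ (mem_ball_self hε)
  rw [Pi.neg_apply] at hu₂x
  linarith

lemma le_of_lt_lipAt_of_mem_closure (hu₁ : IsAMExtension Y F₁ u₁) (hu₂ : IsAMExtension Y F₂ u₂)
    (hF : ∀ y ∈ Y, L < lipAt u₁ y → F₁ y ≤ F₂ y)
    (hcone : ∀ y ∈ Y, lipAt u₁ y ≤ L → ∀ z, L < lipAt u₁ z → u₁ z ≤ F₂ y + L * dist z y)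
    {x : X} (hx : L < lipAt u₁ x) (hxY : x ∈ closure Y) : u₁ x ≤ u₂ x := by
  obtain ⟨K, hK⟩ := hu₁.exists_lipschitzWith
  have hu₂c := hu₂.continuous
  have hle : ∀ y ∈ Y, u₁ x ≤ u₂ y + (K + L) * dist x y := fun y hy => by
    have hKd : 0 ≤ K * dist x y := by positivity
    have hLd : 0 ≤ L * dist x y := by positivity
    rw [hu₂.2.1 hy]
    rcases lt_or_ge (L : ENNReal) (lipAt u₁ y) with hyL | hyL
    · have h := hK.le_add_mul x y
      rw [hu₁.2.1 hy] at h
      linarith [hF y hy hyL]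
    · linarith [hcone y hy hyL x hx]
  have hcont : Continuous fun y => u₂ y + (K + L) * dist x y := by fun_prop
  have h : u₁ x ≤ u₂ x + (K + L) * dist x x :=
    closure_minimal hle (isClosed_le continuous_const hcont) hxY
  simpa using h

theorem le_of_lt_lipAt (hX : IsLengthSpace X) (hY : Y.Nonempty) (hu₁ : IsAMExtension Y F₁ u₁)
    (hu₂ : IsAMExtension Y F₂ u₂) (hb₁ : BddAbove (F₁ '' Y)) (hb₂ : BddAbove ((-F₂) '' Y))
    (hL : 0 < L) (hF : ∀ y ∈ Y, L < lipAt u₁ y → F₁ y ≤ F₂ y)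
    (hcone : ∀ y ∈ Y, lipAt u₁ y ≤ L → ∀ z, L < lipAt u₁ z → u₁ z ≤ F₂ y + L * dist z y)
    {x : X} (hx : L < lipAt u₁ x) : u₁ x ≤ u₂ x := by
  by_cases hxY : x ∈ closure Y
  · exact le_of_lt_lipAt_of_mem_closure hu₁ hu₂ hF hcone hx hxY
  obtain ⟨K₁, hK₁⟩ := hu₁.exists_lipschitzWith
  obtain ⟨K₂, hK₂⟩ := hu₂.exists_lipschitzWith
  obtain ⟨r, hr, hrY⟩ := isOpen_iff.1 isClosed_closure.isOpen_compl x hxY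
  have hlim : Tendsto (fun ε : ℝ => (4 * K₁ + 4 * K₂ + 5 * L) * ε) (𝓝[>] 0) (𝓝 0) :=
    tendsto_nhdsWithin_of_tendsto_nhds (by
      simpa using (continuous_const_mul (4 * K₁ + 4 * K₂ + 5 * L : ℝ)).tendsto 0)
  refine sub_nonpos.1 (ge_of_tendsto hlim ?_)
  filter_upwards [Ioo_mem_nhdsGT (half_pos hr)] with ε ⟨hε, hεr⟩
  have hball : ball x (2 * ε) ⊆ Yᶜ := (ball_subset_ball (by linarith)).trans
    (hrY.trans (compl_subset_compl.2 subset_closure))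
  exact sub_le_mul_of_lt_lipAt hX hu₁ hu₂ (hu₁.bddAbove_range hX hY hb₁)
    (hu₂.neg.bddAbove_range hX hY hb₂) hK₁ hK₂ hL hF hcone hx hε hball

end Comparison

theorem stmt11_general {X : Type*} [MetricSpace X] (hX : IsLengthSpace X)
    {Y : Set X} (hY : Y.Nonempty) {F₁ F₂ u₁ u₂ : X → ℝ}
    (hF₁bdd : ∃ M : ℝ, ∀ y ∈ Y, |F₁ y| ≤ M) (hF₂bdd : ∃ M : ℝ, ∀ y ∈ Y, |F₂ y| ≤ M)
    (hu₁ : IsAMExtension Y F₁ u₁) (hu₂ : IsAMExtension Y F₂ u₂) {L : ℝ} (hL : 0 < L)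
    {Z : Set X} (hZ : Z = {x : X | ENNReal.ofReal L < lipAt u₁ x})
    (hFF : ∀ y ∈ Z ∩ Y, F₁ y = F₂ y)
    (hsup : ∀ y ∈ Y \ Z, ∀ x ∈ Z, |F₂ y - u₁ x| ≤ L * dist y x) :
    Set.EqOn u₁ u₂ Z := by
  subst hZ
  lift L to ℝ≥0 using hL.le
  simp only [ENNReal.ofReal_coe_nnreal, mem_inter_iff, Set.mem_sdiff, mem_ofPred_eq,
    not_lt, and_imp] at hFF hsup
  obtain ⟨M₁, hM₁⟩ := hF₁bdd
  obtain ⟨M₂, hM₂⟩ := hF₂bdd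
  have hcone : ∀ y ∈ Y, lipAt u₁ y ≤ L → ∀ z, L < lipAt u₁ z → |F₂ y - u₁ z| ≤ L * dist z y :=
    fun y hy hyL z hz => dist_comm z y ▸ hsup y hy hyL z hz
  intro x hx
  rw [mem_ofPred_eq, ENNReal.ofReal_coe_nnreal] at hx
  refine le_antisymm ?_ (neg_le_neg_iff.1 ?_)
  · exact le_of_lt_lipAt hX hY hu₁ hu₂
      ⟨M₁, forall_mem_image.2 fun y hy => (le_abs_self _).trans (hM₁ y hy)⟩
      ⟨M₂, forall_mem_image.2 fun y hy => (neg_le_abs _).trans (hM₂ y hy)⟩ hL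
      (fun y hy hyL => (hFF y hyL hy).le)
      (fun y hy hyL z hz => by linarith [abs_le.1 (hcone y hy hyL z hz)]) hx
  · refine le_of_lt_lipAt hX hY hu₁.neg hu₂.neg
      ⟨M₁, forall_mem_image.2 fun y hy => (neg_le_abs _).trans (hM₁ y hy)⟩
      ⟨M₂, forall_mem_image.2 fun y hy => ?_⟩ hL ?_ ?_ (by rwa [lipAt_neg])
    · simpa using (le_abs_self _).trans (hM₂ y hy)
    all_goals simp only [lipAt_neg, Pi.neg_apply]
    · exact fun y hy hyL => neg_le_neg (hFF y hyL hy).ge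
    · exact fun y hy hyL z hz => by linarith [abs_le.1 (hcone y hy hyL z hz)]

/-- If `u₁, u₂` are AM extensions of bounded Lipschitz `F₁, F₂` on `Y`,
`Z = {x : Lip_x u₁ > L}`, `F₁ = F₂` on `Z ∩ Y`, `Lip_{Y∖Z} F₂ ≤ L`, and
`|F₂(y) - u₁(x)| ≤ L d(y,x)` for `y ∈ Y∖Z`, `x ∈ Z`, then `u₁ = u₂` on `Z`. -/
theorem stmt11 {X : Type*} [MetricSpace X] (hX : IsLengthSpace X)
    (Y : Set X) (hY : Y.Nonempty) (F₁ F₂ u₁ u₂ : X → ℝ)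
    (hF₁lip : ∃ K : NNReal, LipschitzOnWith K F₁ Y)
    (hF₁bdd : ∃ M : ℝ, ∀ y ∈ Y, |F₁ y| ≤ M)
    (hF₂lip : ∃ K : NNReal, LipschitzOnWith K F₂ Y)
    (hF₂bdd : ∃ M : ℝ, ∀ y ∈ Y, |F₂ y| ≤ M)
    (hu₁ : IsAMExtension Y F₁ u₁) (hu₂ : IsAMExtension Y F₂ u₂)
    (L : ℝ) (hL : 0 < L)
    (Z : Set X) (hZ : Z = {x : X | ENNReal.ofReal L < lipAt u₁ x})
    (hFF : ∀ y ∈ Z ∩ Y, F₁ y = F₂ y)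
    (hLip₂ : lipOn F₂ (Y \ Z) ≤ ENNReal.ofReal L)
    (hsup : ∀ y ∈ Y \ Z, ∀ x ∈ Z, |F₂ y - u₁ x| ≤ L * dist y x) :
    Set.EqOn u₁ u₂ Z := by
  exact stmt11_general hX hY hF₁bdd hF₂bdd hu₁ hu₂ hL hZ hFF hsup

end
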